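/- arXiv:2305.10173 — 2 statements merged into one kernel-verified Lean document; each statement's English description precedes it below -/
import Mathlib

section
/- Every algebraically closed field k of characteristic 0 admits an involution: there exists a ring automorphism γ of k with γ ∘ γ = id and γ ≠ id. -/
open Filter Polynomial

/-- Polynomial equations over an ultrapower are solved coordinatewise. -/
theorem Filter.Germ.isAlgClosed {I F : Type*} (U : Ultrafilter I) [Field F] [IsAlgClosed F] :
    IsAlgClosed ((U : Filter I).Germ F) := by
  refine IsAlgClosed.of_exists_root _ fun p hp hirr => ?_
  have hlift : p ∈ lifts (Germ.coeRingHom (R := F) (U : Filter I)) := by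
    rw [lifts_iff_coeff_lifts]
    exact fun n => Quotient.exists_rep (p.coeff n)
  obtain ⟨q, rfl, hdeg, hq⟩ := lifts_and_natDegree_eq_and_monic hlift hp
  have hroot (a : I) : ∃ x, (q.map (Pi.evalRingHom (fun _ => F) a)).eval x = 0 := by
    refine IsAlgClosed.exists_root _ (natDegree_pos_iff_degree_pos.mp ?_).ne'
    rw [hq.natDegree_map, hdeg]
    exact hirr.natDegree_pos
  choose r hr using hroot
  refine ⟨Germ.coeRingHom (U : Filter I) r, ?_⟩
  have hqr : q.eval r = 0 := by
    funext a
    have h := eval_map_apply (f := Pi.evalRingHom (fun _ => F) a) (p := q) r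
    exact h.symm.trans (hr a)
  rw [eval_map_apply, hqr, map_zero]

/-- A ring endomorphism acts coordinatewise on the germs along a filter. -/
def Filter.Germ.mapRingHom {I R : Type*} [Semiring R] (l : Filter I) (f : R →+* R) :
    l.Germ R →+* l.Germ R where
  toFun := Germ.map f
  map_one' := congrArg Germ.ofFun (funext fun _ => f.map_one)
  map_zero' := congrArg Germ.ofFun (funext fun _ => f.map_zero)
  map_mul' x y := Germ.inductionOn₂ x y fun _ _ =>
    congrArg Germ.ofFun (funext fun _ => f.map_mul _ _)
  map_add' x y := Germ.inductionOn₂ x y fun _ _ =>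
    congrArg Germ.ofFun (funext fun _ => f.map_add _ _)

/-- Some ultrafilter on the points of rational affine space contains no proper hypersurface. -/
theorem MvPolynomial.exists_ultrafilter_eval_ne_zero (ι : Type*) :
    ∃ U : Ultrafilter (ι → ℚ), ∀ p : MvPolynomial ι ℚ, p ≠ 0 → ∀ᶠ a in U, p.eval a ≠ 0 := by
  let s (p : {p : MvPolynomial ι ℚ // p ≠ 0}) : Set (ι → ℚ) := {a | p.1.eval a ≠ 0}
  have : (⨅ p, 𝓟 (s p)).NeBot := by
    have : Nonempty {p : MvPolynomial ι ℚ // p ≠ 0} := ⟨⟨1, one_ne_zero⟩⟩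
    refine iInf_neBot_of_directed' ?_ fun p => ?_
    · intro p q
      refine ⟨⟨p.1 * q.1, mul_ne_zero p.2 q.2⟩, ?_, ?_⟩ <;>
        simp +contextual [s]
    · rw [principal_neBot_iff]
      by_contra h
      refine p.2 (MvPolynomial.funext fun a => ?_)
      by_contra ha
      exact h ⟨a, by simpa [s] using ha⟩
  refine ⟨Ultrafilter.of (⨅ p, 𝓟 (s p)), fun p hp => ?_⟩
  exact Ultrafilter.of_le _ (mem_iInf_of_mem ⟨p, hp⟩ (mem_principal_self _))

/-- An endomorphism `σ` of `K` that fixes a family algebraically independent over `ℚ` restricts to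
an algebraically closed field `k` having a transcendence basis with the same index type. -/
theorem IsTranscendenceBasis.exists_ringHom_comp_eq {ι k K : Type*} [Field k] [Field K]
    [IsAlgClosed k] [IsAlgClosed K] [Algebra ℚ k] [Algebra ℚ K] {v : ι → k}
    (hv : IsTranscendenceBasis ℚ v) {w : ι → K} (hw : AlgebraicIndependent ℚ w)
    (σ : K →+* K) (hσ : ∀ i, σ (w i) = w i) :
    ∃ (φ : k →+* K) (g : k →+* k), ∀ x, φ (g x) = σ (φ x) := by
  let A := Algebra.adjoin ℚ (Set.range v)
  let θ : A →+* K := (MvPolynomial.aeval w).toRingHom.comp hv.1.aevalEquiv.symm.toRingHom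
  have hθ : Function.Injective θ := Function.Injective.comp (g := MvPolynomial.aeval w) hw
    hv.1.aevalEquiv.symm.injective
  have hσθ (a : A) : σ (θ a) = θ a := by
    have h : σ.toRatAlgHom.comp (MvPolynomial.aeval w) = MvPolynomial.aeval w := by
      ext i
      simp [hσ]
    exact DFunLike.congr_fun h _
  let _ : Algebra A K := θ.toAlgebra
  have : FaithfulSMul A K := (faithfulSMul_iff_algebraMap_injective A K).mpr hθ
  have : Algebra.IsAlgebraic A k := hv.isAlgebraic
  let φ : k →ₐ[A] K := IsAlgClosed.lift
  let τ : K →ₐ[A] K := { σ with commutes' := hσθ }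
  have hmem (x : k) : σ (φ x) ∈ (φ : k →+* K).range := by
    obtain ⟨p, hp, hpx⟩ := Algebra.IsAlgebraic.isAlgebraic (R := A) x
    refine (IsAlgClosed.splits (p.map (algebraMap A k))).mem_range_of_isRoot
      ((Polynomial.map_ne_zero_iff (FaithfulSMul.algebraMap_injective A k)).mpr hp) ?_
    rw [Polynomial.map_map, φ.comp_algebraMap, IsRoot.def, eval_map_algebraMap]
    change aeval (τ (φ x)) p = 0
    rw [aeval_algHom_apply, aeval_algHom_apply, hpx, map_zero, map_zero]
  choose g hg using hmem
  have hinj : Function.Injective (φ : k →+* K) := φ.injective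
  change ∀ x, (φ : k →+* K) (g x) = σ ((φ : k →+* K) x) at hg
  refine ⟨φ, ⟨⟨⟨g, ?_⟩, ?_⟩, ?_, ?_⟩, hg⟩ <;> intros <;> apply hinj <;>
    simp only [hg, map_one, map_mul, map_zero, map_add]

theorem stmt_3 (k : Type*) [Field k] [IsAlgClosed k] [CharZero k] :
    ∃ γ : k ≃+* k, (∀ x, γ (γ x) = x) ∧ γ ≠ RingEquiv.refl k := by
  obtain ⟨s, hs⟩ := exists_isTranscendenceBasis ℚ k
  obtain ⟨U, hU⟩ := MvPolynomial.exists_ultrafilter_eval_ne_zero s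
  let c := Germ.coeRingHom (R := ℂ) (U : Filter (s → ℚ))
  have := Germ.isAlgClosed (F := ℂ) U
  have : CharZero ((U : Filter (s → ℚ)).Germ ℂ) :=
    charZero_of_injective_ringHom (c.comp (Pi.constRingHom _ ℂ)).injective
  let σ := Germ.mapRingHom (U : Filter (s → ℚ)) (starRingEnd ℂ)
  let w (i : s) : (U : Filter (s → ℚ)).Germ ℂ := c fun a => (a i : ℂ)
  have hw : AlgebraicIndependent ℚ w := by
    rw [algebraicIndependent_iff]
    intro p hp
    by_contra hp0
    have haeval : MvPolynomial.aeval w p = c fun a => (p.eval a : ℂ) := by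
      let e : MvPolynomial s ℚ →+* ((s → ℚ) → ℂ) :=
        RingHom.pi fun a => (algebraMap ℚ ℂ).comp (MvPolynomial.eval a)
      have h : MvPolynomial.aeval w = (c.comp e).toRatAlgHom := by
        ext i
        rw [MvPolynomial.aeval_X]
        refine congrArg c (funext fun a => ?_)
        simp [e]
      exact DFunLike.congr_fun h p
    rw [haeval] at hp
    have hzero : ∀ᶠ a in U, (p.eval a : ℂ) = 0 := Germ.coe_eq.mp hp
    obtain ⟨a, ha, ha'⟩ := (hzero.and (hU p hp0)).exists
    exact ha' (by exact_mod_cast ha)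
  have hσw (i : s) : σ (w i) = w i :=
    congrArg Germ.ofFun (funext fun a => Complex.conj_ofReal (a i : ℝ))
  have hσσ (x) : σ (σ x) = x := Germ.inductionOn x fun _ =>
    congrArg Germ.ofFun (funext fun _ => Complex.conj_conj _)
  obtain ⟨φ, g, hg⟩ := hs.exists_ringHom_comp_eq hw σ hσw
  have hgg (x : k) : g (g x) = x := φ.injective (by rw [hg, hg, hσσ])
  refine ⟨RingEquiv.ofRingHom g g (RingHom.ext hgg) (RingHom.ext hgg), hgg, fun h => ?_⟩
  obtain ⟨j, hj⟩ := IsAlgClosed.exists_pow_nat_eq (-1 : k) two_pos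
  have hfix : σ (φ j) = φ j := by rw [← hg]; exact congrArg φ (DFunLike.congr_fun h j)
  have hI : c (fun _ => Complex.I) ^ 2 = -1 := by
    rw [← map_pow, ← map_one c, ← map_neg]
    exact congrArg c (funext fun _ => Complex.I_sq)
  have hσI : σ (c fun _ => Complex.I) = -c fun _ => Complex.I :=
    congrArg Germ.ofFun (funext fun _ => Complex.conj_I)
  have hφj : φ j ^ 2 = c (fun _ => Complex.I) ^ 2 := by
    rw [hI, ← map_pow, hj, map_neg, map_one]
  have hI0 : c (fun _ => Complex.I) ≠ 0 := by
    intro h0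
    simp [h0] at hI
  rcases sq_eq_sq_iff_eq_or_eq_neg.mp hφj with h | h <;> rw [h] at hfix
  · exact hI0 (neg_eq_self.mp (hσI.symm.trans hfix))
  · rw [map_neg, hσI, neg_neg] at hfix
    exact hI0 (neg_eq_self.mp hfix.symm)
end

section
/- (Schnor's theorem) Let ℓ/k be an extension of algebraically closed fields (k an algebraically closed subfield of the algebraically closed field ℓ), and let γ be an involution of k (a ring automorphism with γ ∘ γ = id and γ ≠ id). Then there exists an involution γ̄ of ℓ (a ring automorphism of ℓ with γ̄ ∘ γ̄ = id and γ̄ ≠ id) such that γ̄ maps k into k and the restriction of γ̄ to k equals γ. -/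
open Polynomial IntermediateField

section Semireal

variable {K : Type*} [Field K]

theorem IsSumSq.map {R S F : Type*} [Semiring R] [Semiring S] [FunLike F R S] [RingHomClass F R S]
    (f : F) {s : R} (hs : IsSumSq s) : IsSumSq (f s) := by
  induction hs with
  | zero => simp
  | sq_add a _ ih => simpa using IsSumSq.sq_add (f a) ih

theorem IsSumSq.inv {s : K} (hs : IsSumSq s) : IsSumSq s⁻¹ := by
  rcases eq_or_ne s 0 with rfl | h
  · simp
  · rw [show s⁻¹ = s * (s⁻¹ * s⁻¹) by field_simp]
    exact hs.mul (.mul_self _)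

theorem IsSumSq.eq_zero_of_add_eq_zero [IsSemireal K] {s t : K} (hs : IsSumSq s) (ht : IsSumSq t)
    (h : s + t = 0) : s = 0 := by
  by_contra h0
  refine IsSemireal.one_add_ne_zero (ht.mul hs.inv) ?_
  field_simp
  simpa using h

theorem Polynomial.even_natDegree_of_isSumSq [IsSemireal K] {p : K[X]} (hp : IsSumSq p) :
    Even p.natDegree ∧ IsSumSq p.leadingCoeff := by
  induction hp with
  | zero => simp
  | @sq_add a s _ ih =>
    have ha : Even (a * a).natDegree ∧ IsSumSq (a * a).leadingCoeff := by
      refine ⟨by simp [← pow_two], by simp⟩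
    rcases lt_trichotomy (a * a).degree s.degree with h | h | h
    · rw [natDegree_add_eq_right_of_degree_lt h, leadingCoeff_add_of_degree_lt h]
      exact ih
    · by_cases h0 : (a * a).leadingCoeff + s.leadingCoeff = 0
      · have h1 := ha.2.eq_zero_of_add_eq_zero ih.2 h0
        have h2 := h1 ▸ h0
        rw [zero_add] at h2
        rw [leadingCoeff_eq_zero] at h1 h2
        simp [h1, h2]
      · rw [leadingCoeff_add_of_degree_eq h h0]
        refine ⟨?_, ha.2.add ih.2⟩
        have : (a * a + s).degree = (a * a).degree := by
          rw [degree_add_eq_of_leadingCoeff_add_ne_zero h0, h, max_self]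
        rw [natDegree_eq_of_degree_eq this]
        exact ha.1
    · rw [natDegree_add_eq_left_of_degree_lt h, leadingCoeff_add_of_degree_lt' h]
      exact ha

end Semireal

section Adjoin

variable {K L : Type*} [Field K] [Field L] [Algebra K L]

theorem exists_aeval_eq_of_isSumSq_adjoin {α : L} {s : K⟮α⟯} (hs : IsSumSq s) :
    ∃ g h : K[X], aeval α g ≠ 0 ∧ IsSumSq h ∧ aeval α (g * g) * s = aeval α h := by
  induction hs with
  | zero => exact ⟨1, 0, by simp, .zero, by simp⟩
  | @sq_add a s _ ih =>
    obtain ⟨g, h, hg, hh, e⟩ := ih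
    obtain ⟨r, t, hrt⟩ := (mem_adjoin_simple_iff K _).1 a.2
    by_cases ht : aeval α t = 0
    · have : a = 0 := by ext; simp [hrt, ht]
      exact ⟨g, h, hg, hh, by simpa [this] using e⟩
    · refine ⟨g * t, (g * r) * (g * r) + h * (t * t), by simp [hg, ht],
        .sq_add _ (hh.mul (.mul_self _)), ?_⟩
      simp only [map_mul, map_add, ← e]
      push_cast
      rw [hrt]
      field_simp

theorem exists_aeval_eq_of_isSumSq_adjoin_of_monic {α : L} {f : K[X]} (hf : f.Monic)
    (hα : aeval α f = 0) (h1 : f ≠ 1) {s : K⟮α⟯} (hs : IsSumSq s) :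
    ∃ h : K[X], IsSumSq h ∧ h.natDegree ≤ 2 * (f.natDegree - 1) ∧ aeval α h = s := by
  have hint : IsIntegral K α := ⟨f, hf, hα⟩
  induction hs with
  | zero => exact ⟨0, .zero, by simp, by simp⟩
  | @sq_add a s _ ih =>
    obtain ⟨h, hh, hd, e⟩ := ih
    have ha : (a : L) ∈ K⟮α⟯.toSubalgebra := a.2
    rw [adjoin_simple_toSubalgebra_of_isAlgebraic hint.isAlgebraic,
      Algebra.adjoin_singleton_eq_range_aeval] at ha
    obtain ⟨p, hp⟩ := ha
    have hp' : aeval α (p %ₘ f) = a := by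
      rw [aeval_modByMonic_eq_self_of_root hα]; exact hp
    refine ⟨(p %ₘ f) * (p %ₘ f) + h, .sq_add _ hh, natDegree_add_le_of_degree_le ?_ hd, ?_⟩
    · have := natDegree_modByMonic_lt p hf h1
      rw [← pow_two, natDegree_pow]
      omega
    · simp [hp', e]

theorem exists_eq_add_mul_of_mem_adjoin_sqrt {α : L} {a : K} (hα : α * α = algebraMap K L a)
    {x : L} (hx : x ∈ K⟮α⟯) : ∃ c d : K, x = algebraMap K L c + algebraMap K L d * α := by
  have hm := monic_X_pow_sub_C a two_ne_zero
  have h0 : aeval α (X ^ 2 - C a) = 0 := by simp [pow_two, hα]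
  have hint : IsIntegral K α := ⟨_, hm, h0⟩
  change x ∈ K⟮α⟯.toSubalgebra at hx
  rw [adjoin_simple_toSubalgebra_of_isAlgebraic hint.isAlgebraic,
    Algebra.adjoin_singleton_eq_range_aeval] at hx
  obtain ⟨p, rfl⟩ := hx
  have hne : (X ^ 2 - C a : K[X]) ≠ 1 := fun h => by
    have := congrArg natDegree h
    simp at this
  have hdeg := natDegree_modByMonic_lt p hm hne
  rw [natDegree_X_pow_sub_C] at hdeg
  refine ⟨(p %ₘ (X ^ 2 - C a)).coeff 0, (p %ₘ (X ^ 2 - C a)).coeff 1, ?_⟩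
  have h := congrArg (aeval α) (eq_X_add_C_of_natDegree_le_one (Nat.le_of_lt_succ hdeg))
  rw [aeval_modByMonic_eq_self_of_root h0] at h
  simpa [add_comm] using h

theorem exists_eq_of_isSumSq_adjoin_sqrt {α : L} {a : K} (hα : α * α = algebraMap K L a)
    {s : K⟮α⟯} (hs : IsSumSq s) : ∃ u v w : K, IsSumSq u ∧ IsSumSq v ∧
      (s : L) = algebraMap K L (u + a * v) + algebraMap K L w * α := by
  induction hs with
  | zero => exact ⟨0, 0, 0, by simp⟩
  | @sq_add x s _ ih =>
    obtain ⟨u, v, w, hu, hv, e⟩ := ih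
    obtain ⟨d, c, hx⟩ := exists_eq_add_mul_of_mem_adjoin_sqrt hα x.2
    refine ⟨d * d + u, c * c + v, w + 2 * (c * d), .sq_add _ hu, .sq_add _ hv, ?_⟩
    push_cast
    rw [e, hx]
    simp only [map_add, map_mul, map_ofNat]
    linear_combination (algebraMap K L c * algebraMap K L c) * hα

end Adjoin

section Maximal

variable {K L : Type*} [Field K] [Field L] [Algebra K L] [IsSemireal K]

theorem isAlgebraic_of_not_isSemireal_adjoin {α : L} (h : ¬ IsSemireal K⟮α⟯) :
    IsAlgebraic K α := by
  rw [isSemireal_iff_not_isSumSq_neg_one, not_not] at h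
  obtain ⟨g, p, hg, hp, e⟩ := exists_aeval_eq_of_isSumSq_adjoin h
  have hg0 : g ≠ 0 := by rintro rfl; simp at hg
  refine ⟨g * g + p, fun h0 => ?_, by rw [map_add, ← e]; simp⟩
  have hgg : IsSumSq (g * g) := .mul_self g
  obtain ⟨c, hc⟩ : ∃ c, g.eval c ≠ 0 := by
    by_contra! hc
    exact hg0 (Polynomial.funext (by simpa using hc))
  have hpc : IsSumSq (p.eval c) := by simpa using hp.map (evalRingHom c)
  have := (IsSumSq.mul_self (g.eval c)).eq_zero_of_add_eq_zero hpc
    (by simpa using congrArg (eval c) h0)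
  simp [hc] at this

theorem isSumSq_neg_of_not_isSemireal_adjoin {α : L} {a : K} (hα : α * α = algebraMap K L a)
    (hmem : α ∉ (⊥ : IntermediateField K L)) (h : ¬ IsSemireal K⟮α⟯) : IsSumSq (-a) := by
  rw [isSemireal_iff_not_isSumSq_neg_one, not_not] at h
  obtain ⟨u, v, w, hu, hv, e⟩ := exists_eq_of_isSumSq_adjoin_sqrt hα h
  rw [show ((-1 : K⟮α⟯) : L) = -1 by simp] at e
  have hw : w = 0 := by
    by_contra hw
    refine hmem (mem_bot.2 ⟨-(1 + (u + a * v)) / w, ?_⟩)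
    have hw' : algebraMap K L w ≠ 0 := by simpa using hw
    rw [map_div₀, div_eq_iff hw']
    simp only [map_neg, map_add, map_one] at e ⊢
    linear_combination e
  have e' : -1 = u + a * v := (algebraMap K L).injective (by simpa [hw] using e)
  have hv0 : v ≠ 0 := by
    rintro rfl
    exact IsSemireal.one_add_ne_zero hu (by linear_combination -e')
  rw [show -a = (1 * 1 + u) * v⁻¹ by field_simp; linear_combination e']
  exact (IsSumSq.sq_add _ hu).mul hv.inv

variable [IsAlgClosed L]

theorem isSquare_or_isSumSq_neg (hmax : ∀ α : L, IsSemireal K⟮α⟯ → α ∈ (⊥ : IntermediateField K L))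
    (a : K) : IsSquare a ∨ IsSumSq (-a) := by
  obtain ⟨α, hα⟩ := IsAlgClosed.exists_pow_nat_eq (algebraMap K L a) two_pos
  rw [pow_two] at hα
  by_cases hmem : α ∈ (⊥ : IntermediateField K L)
  · obtain ⟨b, rfl⟩ := mem_bot.1 hmem
    exact .inl ⟨b, (algebraMap K L).injective (by simp [hα])⟩
  · exact .inr (isSumSq_neg_of_not_isSemireal_adjoin hα hmem (mt (hmax α) hmem))

theorem exists_isRoot_of_odd_natDegree_of_maximal
    (hmax : ∀ α : L, IsSemireal K⟮α⟯ → α ∈ (⊥ : IntermediateField K L))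
    {f : K[X]} (hf : Odd f.natDegree) : ∃ x, f.IsRoot x := by
  induction hn : f.natDegree using Nat.strong_induction_on generalizing f with
  | _ n ih =>
  subst hn
  have hf0 : f ≠ 0 := by rintro rfl; simp at hf
  have hfu : ¬ IsUnit f := fun hu => by simp [natDegree_eq_zero_of_isUnit hu] at hf
  by_cases hirr : Irreducible f
  · obtain ⟨α, hα⟩ := IsAlgClosed.exists_aeval_eq_zero L f
      (degree_pos_of_irreducible hirr).ne'
    by_cases hmem : α ∈ (⊥ : IntermediateField K L)
    · obtain ⟨b, rfl⟩ := mem_bot.1 hmem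
      exact ⟨b, by simpa [aeval_algebraMap_apply] using hα⟩
    · have h := mt (hmax α) hmem
      rw [isSemireal_iff_not_isSumSq_neg_one, not_not] at h
      set m := minpoly K α with hm
      have hint : IsIntegral K α := (isAlgebraic_iff_isIntegral).1 ⟨f, hf0, hα⟩
      have hmf : m.natDegree = f.natDegree := by
        obtain ⟨c, hc⟩ := minpoly.dvd K α hα
        have hcu := (hirr.isUnit_or_isUnit hc).resolve_left (minpoly.not_isUnit K α)
        rw [hc, natDegree_mul (minpoly.ne_zero hint) hcu.ne_zero,
          natDegree_eq_zero_of_isUnit hcu, add_zero]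
      obtain ⟨p, hp, hpd, e⟩ := exists_aeval_eq_of_isSumSq_adjoin_of_monic (minpoly.monic hint)
        (minpoly.aeval K α) (minpoly.ne_one K α) h
      rw [← hm, hmf] at hpd
      have hq : IsSumSq (1 * 1 + p) := .sq_add _ hp
      obtain ⟨c, hc⟩ := minpoly.dvd K α (p := 1 * 1 + p) (by simp [e])
      have hq0 : 1 * 1 + p ≠ 0 := fun h0 => by
        have := (IsSumSq.mul_self (1 : K)).eq_zero_of_add_eq_zero
          (hp.map (evalRingHom 0)) (by simpa using congrArg (eval 0) h0)
        simp at this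
      have hc0 : c ≠ 0 := by rintro rfl; exact hq0 (by rw [hc, mul_zero])
      have hdeg := (even_natDegree_of_isSumSq hq).1
      have hle : (1 * 1 + p).natDegree ≤ 2 * (f.natDegree - 1) :=
        natDegree_add_le_of_degree_le (by simp) hpd
      rw [hc, natDegree_mul (minpoly.ne_zero hint) hc0, ← hm, hmf] at hdeg hle
      have hco : Odd c.natDegree := by grind
      have hlt : c.natDegree < f.natDegree := by have := hf.pos; omega
      obtain ⟨x, hx⟩ := ih _ hlt hco rfl
      have := (IsSumSq.mul_self (1 : K)).eq_zero_of_add_eq_zero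
          (hp.map (evalRingHom x)) (by simpa [hx.eq_zero] using congrArg (eval x) hc)
      simp at this
  · rw [irreducible_iff] at hirr
    push Not at hirr
    obtain ⟨g, h, rfl, hg, hh⟩ := hirr hfu
    have hg0 := left_ne_zero_of_mul hf0
    have hh0 := right_ne_zero_of_mul hf0
    have hgd : 0 < g.natDegree := by
      rw [natDegree_pos_iff_degree_pos]; exact degree_pos_of_ne_zero_of_nonunit hg0 hg
    have hhd : 0 < h.natDegree := by
      rw [natDegree_pos_iff_degree_pos]; exact degree_pos_of_ne_zero_of_nonunit hh0 hh
    rw [natDegree_mul hg0 hh0] at hf ih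
    rcases Nat.even_or_odd g.natDegree with hge | hgo
    · obtain ⟨x, hx⟩ := ih h.natDegree (by omega) (by grind) rfl
      exact ⟨x, root_mul_left_of_isRoot _ hx⟩
    · obtain ⟨x, hx⟩ := ih g.natDegree (by omega) hgo rfl
      exact ⟨x, root_mul_right_of_isRoot _ hx⟩

theorem isRealClosed_of_maximal
    (hmax : ∀ α : L, IsSemireal K⟮α⟯ → α ∈ (⊥ : IntermediateField K L)) : IsRealClosed K where
  isSquare_or_isSquare_neg a := by
    refine (isSquare_or_isSumSq_neg hmax a).imp_right fun ha => ?_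
    rcases isSquare_or_isSumSq_neg hmax (-a) with h | ha'
    · exact h
    · simp [ha.eq_zero_of_add_eq_zero ha' (by ring)]
  exists_isRoot_of_odd_natDegree := exists_isRoot_of_odd_natDegree_of_maximal hmax

omit [IsAlgClosed L] in
theorem isAlgebraic_of_maximal
    (hmax : ∀ α : L, IsSemireal K⟮α⟯ → α ∈ (⊥ : IntermediateField K L)) :
    Algebra.IsAlgebraic K L where
  isAlgebraic α := by
    by_cases h : IsSemireal K⟮α⟯
    · obtain ⟨b, rfl⟩ := mem_bot.1 (hmax α h)
      exact isAlgebraic_algebraMap b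
    · exact isAlgebraic_of_not_isSemireal_adjoin h

end Maximal

section RealClosed

theorem IsRealClosed.exists_sqrt {K : Type*} [Field K] [IsRealClosed K] {L : Type*} [Field L]
    [Algebra K L] {i : L} (hi : i * i = -1) (a b : K) : ∃ c d : K,
      (algebraMap K L c + algebraMap K L d * i) ^ 2 = algebraMap K L a + algebraMap K L b * i := by
  suffices h : ∃ c d : K, c * c - d * d = a ∧ 2 * c * d = b by
    obtain ⟨c, d, rfl, rfl⟩ := h
    refine ⟨c, d, ?_⟩
    simp only [map_sub, map_mul, map_ofNat]
    linear_combination (algebraMap K L d * algebraMap K L d) * hi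
  have key : ∀ n : K, a * a + b * b = n * n → IsSquare ((a + n) / 2) →
      ∃ c d : K, c * c - d * d = a ∧ 2 * c * d = b := by
    rintro n hn ⟨p, hp⟩
    by_cases hp0 : p = 0
    · have hna : n = -a := by
        subst hp0
        linear_combination 2 * hp
      have hb : b = 0 := by
        rw [← mul_self_eq_zero]
        linear_combination hn + (n - a) * hna
      rcases IsRealClosed.isSquare_or_isSquare_neg a with ⟨q, hq⟩ | ⟨q, hq⟩
      · exact ⟨q, 0, by linear_combination -hq, by simp [hb]⟩
      · exact ⟨0, q, by linear_combination hq, by simp [hb]⟩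
    · refine ⟨p, b / (2 * p), ?_, by field_simp⟩
      have hn' : n = 2 * (p * p) - a := by linear_combination 2 * hp
      subst hn'
      field_simp
      linear_combination -hn
  obtain ⟨n, hn⟩ : IsSquare (a * a + b * b) := by
    have hs : IsSumSq (a * a + b * b) := .sq_add _ (.mul_self b)
    rcases IsRealClosed.isSquare_or_isSquare_neg (a * a + b * b) with h | h
    · exact h
    · rw [hs.eq_zero_of_add_eq_zero h.isSumSq (by ring)]
      exact .zero
  rcases IsRealClosed.isSquare_or_isSquare_neg ((a + n) / 2) with h | ⟨q, hq⟩
  · exact key n hn h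
  · by_cases hq0 : q = 0
    · exact key n hn ⟨0, by rw [hq0] at hq; linear_combination -hq⟩
    · refine key (-n) (by linear_combination hn) ⟨b / (2 * q), ?_⟩
      have hn' : n = -2 * (q * q) - a := by linear_combination -2 * hq
      subst hn'
      field_simp
      linear_combination -hn

theorem finrank_eq_one_of_isSquare {K N : Type*} [Field K] [Field N] [Algebra K N] [CharZero K]
    [FiniteDimensional K N] [IsGalois K N] {n : ℕ} (hn : Module.finrank K N = 2 ^ n)
    (hsq : ∀ a : K, IsSquare a) : Module.finrank K N = 1 := by
  rcases n with _ | n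
  · simpa using hn
  exfalso
  have hcard := IsGalois.card_aut_eq_finrank K N
  obtain ⟨H, hH⟩ := Sylow.exists_subgroup_card_pow_prime (G := Gal(N/K)) 2 (n := n)
    (by rw [hcard, hn]; exact pow_dvd_pow 2 n.le_succ)
  have hF : Module.finrank K (fixedField H) = 2 := by
    have h1 := Module.finrank_mul_finrank K (fixedField H) N
    rw [finrank_fixedField_eq_card, hn, hH, pow_succ'] at h1
    exact Nat.eq_of_mul_eq_mul_right (by positivity) h1
  suffices h : fixedField H = ⊥ by
    rw [h, IntermediateField.finrank_bot] at hF
    omega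
  refine eq_bot_iff.2 fun x hx => ?_
  have hint : IsIntegral K x := .of_finite K x
  have hd : (minpoly K x).natDegree ≤ 2 := by
    rw [← hF]
    have := minpoly.natDegree_le (A := K) (⟨x, hx⟩ : fixedField H)
    rwa [minpoly_eq] at this
  have h0 := minpoly.aeval K x
  have h2 : (2 : N) ≠ 0 := by
    have : CharZero N := charZero_of_injective_algebraMap (algebraMap K N).injective
    exact two_ne_zero
  obtain h1 | h1 := hd.lt_or_eq
  · refine mem_bot.2 (minpoly.mem_range_of_degree_eq_one K x ?_)
    have := minpoly.natDegree_pos hint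
    exact (degree_eq_iff_natDegree_eq_of_pos one_pos).2 (by omega)
  · have hlead : (minpoly K x).coeff 2 = 1 := h1 ▸ (minpoly.monic hint).coeff_natDegree
    rw [aeval_eq_sum_range, h1] at h0
    simp only [Finset.sum_range_succ, Finset.sum_range_zero, hlead, Algebra.smul_def] at h0
    set b := (minpoly K x).coeff 1
    set c := (minpoly K x).coeff 0
    obtain ⟨s, hs⟩ := hsq (b * b - 4 * c)
    have hs' := congrArg (algebraMap K N) hs
    simp only [map_sub, map_mul, map_ofNat] at hs'
    have : (2 * x + algebraMap K N b) * (2 * x + algebraMap K N b) =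
        algebraMap K N s * algebraMap K N s := by
      rw [← hs']
      simp only [map_one] at h0
      linear_combination 4 * h0
    rcases mul_self_eq_mul_self_iff.1 this with h | h
    · refine mem_bot.2 ⟨(s - b) / 2, ?_⟩
      rw [map_div₀, map_sub, map_ofNat, div_eq_iff h2]
      linear_combination -h
    · refine mem_bot.2 ⟨(-s - b) / 2, ?_⟩
      rw [map_div₀, map_sub, map_neg, map_ofNat, div_eq_iff h2]
      linear_combination -h

theorem exists_finrank_eq_two_pow {K N : Type*} [Field K] [Field N] [Algebra K N]
    [FiniteDimensional K N] [IsGalois K N]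
    (hodd : ∀ f : K[X], Odd f.natDegree → ∃ x, f.IsRoot x) :
    ∃ n, Module.finrank K N = 2 ^ n := by
  let P : Sylow 2 Gal(N/K) := default
  have hidx : Module.finrank K (fixedField (P : Subgroup Gal(N/K))) =
      (P : Subgroup Gal(N/K)).index := by
    have h1 := Module.finrank_mul_finrank K (fixedField (P : Subgroup Gal(N/K))) N
    rw [finrank_fixedField_eq_card, ← IsGalois.card_aut_eq_finrank K N,
      ← Subgroup.index_mul_card (P : Subgroup Gal(N/K))] at h1
    exact Nat.eq_of_mul_eq_mul_right Nat.card_pos h1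
  have hbot : fixedField (P : Subgroup Gal(N/K)) = ⊥ := by
    refine eq_bot_iff.2 fun x hx => ?_
    have hint : IsIntegral K x := .of_finite K x
    have hd : (minpoly K x).natDegree ∣ (P : Subgroup Gal(N/K)).index := by
      rw [← hidx]
      have := minpoly.degree_dvd (K := K)
        (.of_finite K (⟨x, hx⟩ : fixedField (P : Subgroup Gal(N/K))))
      rwa [minpoly_eq] at this
    have ho : Odd (minpoly K x).natDegree := by
      rw [← Nat.not_even_iff_odd]
      exact fun h => P.not_dvd_index (h.two_dvd.trans hd)
    obtain ⟨y, hy⟩ := hodd _ ho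
    exact mem_bot.2 (minpoly.mem_range_of_degree_eq_one K x
      (degree_eq_one_of_irreducible_of_root (minpoly.irreducible hint) hy))
  rw [hbot, IntermediateField.finrank_bot] at hidx
  refine ⟨(Nat.card Gal(N/K)).factorization 2, ?_⟩
  rw [← P.card_eq_multiplicity, ← IsGalois.card_aut_eq_finrank K N,
    ← Subgroup.index_mul_card (P : Subgroup Gal(N/K)), ← hidx, one_mul]

theorem IsRealClosed.exists_eq_add_mul {K L : Type*} [Field K] [IsRealClosed K] [Field L]
    [Algebra K L] [IsAlgClosed L] [Algebra.IsAlgebraic K L] {i : L} (hi : i * i = -1) (x : L) :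
    ∃ a b : K, x = algebraMap K L a + algebraMap K L b * i := by
  have : IsAlgClosure K L := ⟨inferInstance, inferInstance⟩
  have : Normal K L := IsAlgClosure.normal K L
  have hfin : FiniteDimensional K (adjoin K {i, x}) :=
    finiteDimensional_adjoin fun y _ => Algebra.IsIntegral.isIntegral y
  let N := normalClosure K (adjoin K {i, x}) L
  have hle : adjoin K {i, x} ≤ N := le_normalClosure _
  have : FiniteDimensional K N := inferInstance
  have : Normal K N := inferInstance
  have : IsGalois K N := ⟨⟩
  obtain ⟨n, hn⟩ := exists_finrank_eq_two_pow (K := K) (N := N)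
    fun f hf => IsRealClosed.exists_isRoot_of_odd_natDegree hf
  let j : N := ⟨i, hle (subset_adjoin K _ (by simp))⟩
  have hj : j * j = -1 := Subtype.ext hi
  have hj' : j * j = algebraMap K N (-1) := by rw [hj, map_neg, map_one]
  have hdvd : Module.finrank K⟮j⟯ N ∣ 2 ^ n := hn ▸ Dvd.intro_left _
    (Module.finrank_mul_finrank K K⟮j⟯ N)
  obtain ⟨m, -, hm⟩ := (Nat.dvd_prime_pow Nat.prime_two).1 hdvd
  have h1 := finrank_eq_one_of_isSquare hm fun a => by
    obtain ⟨u, v, huv⟩ := exists_eq_add_mul_of_mem_adjoin_sqrt hj' a.2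
    obtain ⟨c, d, hcd⟩ := IsRealClosed.exists_sqrt hj u v
    refine ⟨algebraMap K K⟮j⟯ c + algebraMap K K⟮j⟯ d * AdjoinSimple.gen K j, ?_⟩
    ext1
    rw [huv, ← hcd, pow_two]
    rfl
  have htop : K⟮j⟯ = ⊤ := IntermediateField.finrank_eq_one_iff_eq_top.1 h1
  obtain ⟨a, b, hab⟩ := exists_eq_add_mul_of_mem_adjoin_sqrt hj'
    (x := ⟨x, hle (subset_adjoin K _ (by simp))⟩) (by rw [htop]; trivial)
  exact ⟨a, b, congrArg Subtype.val hab⟩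

end RealClosed

section Involution

variable {k : Type*} [Field k] [IsAlgClosed k]

theorem two_ne_zero_of_involution {γ : k ≃+* k} (hinv : ∀ x, γ (γ x) = x)
    (hne : γ ≠ RingEquiv.refl k) : (2 : k) ≠ 0 := by
  intro h2
  obtain ⟨u, hu⟩ : ∃ u, γ u ≠ u := by
    by_contra! h
    exact hne (RingEquiv.ext h)
  have hneg : ∀ z : k, z + z = 0 := fun z => by linear_combination z * h2
  have hs : u + γ u ≠ 0 := fun h => hu (by linear_combination h - hneg u)
  set x := u / (u + γ u) with hx
  have hγx : γ x = x + 1 := by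
    rw [hx, map_div₀, map_add, hinv, add_comm (γ u) u]
    field_simp
    linear_combination -hneg u
  obtain ⟨y, hy⟩ := IsAlgClosed.exists_root (X ^ 2 + X - C (x * (x * (x + 1))) : k[X]) (by
    have : (X ^ 2 + X - C (x * (x * (x + 1))) : k[X]).degree = 2 := by compute_degree!
    rw [this]; decide)
  simp only [IsRoot.def, eval_sub, eval_add, eval_pow, eval_X, eval_C] at hy
  have hγy := congrArg γ hy
  simp only [map_sub, map_add, map_pow, map_mul, map_zero, hγx, map_one] at hγy
  have hz : (y + γ y - x) * (y + γ y - (x + 1)) = 0 := by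
    linear_combination hy + hγy + (y * γ y + (x + 1) ^ 3 - (x + 1) * (y + γ y)) * h2
  have hfix : γ (y + γ y) = y + γ y := by rw [map_add, hinv, add_comm]
  rcases mul_eq_zero.1 hz with h | h
  · rw [sub_eq_zero.1 h, hγx] at hfix
    simp at hfix
  · rw [sub_eq_zero.1 h, map_add, hγx, map_one] at hfix
    simp at hfix

theorem map_eq_neg_of_involution {γ : k ≃+* k} (hinv : ∀ x, γ (γ x) = x)
    (hne : γ ≠ RingEquiv.refl k) {i : k} (hi : i * i = -1) : γ i = -i := by
  have h2 := two_ne_zero_of_involution hinv hne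
  obtain ⟨u, hu⟩ : ∃ u, γ u ≠ u := by
    by_contra! h
    exact hne (RingEquiv.ext h)
  have hγi : γ i * γ i = i * i := by rw [← map_mul, hi, map_neg, map_one]
  refine (mul_self_eq_mul_self_iff.1 hγi).resolve_left fun hfix => ?_
  obtain ⟨b, hb⟩ := IsAlgClosed.exists_pow_nat_eq (u - γ u) two_pos
  have hb0 : b ≠ 0 := by
    rintro rfl
    exact hu (by linear_combination hb)
  have hγb : γ b ^ 2 = (i * b) ^ 2 := by
    rw [← map_pow, hb, map_sub, hinv, mul_pow, hb]
    linear_combination (γ u - u) * hi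
  have h : γ (γ b) = -b := by
    rcases sq_eq_sq_iff_eq_or_eq_neg.1 hγb with h | h
    · rw [h, map_mul, h, hfix]
      linear_combination b * hi
    · rw [h, map_neg, map_mul, h, hfix]
      linear_combination b * hi
  rw [hinv] at h
  exact mul_ne_zero h2 hb0 (by linear_combination h)

theorem exists_eq_mul_self_of_isSumSq_fixed {γ : k ≃+* k} (hinv : ∀ x, γ (γ x) = x)
    (hne : γ ≠ RingEquiv.refl k) {s : RingHom.eqLocusField (γ : k →+* k) (RingHom.id k)}
    (hs : IsSumSq s) : ∃ y, γ y = y ∧ (s : k) = y * y := by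
  induction hs with
  | zero => exact ⟨0, by simp⟩
  | @sq_add x s _ ih =>
    obtain ⟨y, hy, e⟩ := ih
    have hx : γ x = x := x.2
    obtain ⟨i, hi⟩ := IsAlgClosed.exists_pow_nat_eq (-1 : k) two_pos
    rw [pow_two] at hi
    obtain ⟨z, hz⟩ := IsAlgClosed.exists_pow_nat_eq (x + i * y : k) two_pos
    have hγz := congrArg γ hz
    rw [map_pow, map_add, map_mul, hx, hy, map_eq_neg_of_involution hinv hne hi] at hγz
    refine ⟨z * γ z, by rw [map_mul, hinv, mul_comm], ?_⟩
    push_cast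
    rw [e]
    linear_combination (-γ z ^ 2) * hz - (x + i * y) * hγz + y * y * hi

theorem isSemireal_fixed_of_involution {γ : k ≃+* k} (hinv : ∀ x, γ (γ x) = x)
    (hne : γ ≠ RingEquiv.refl k) :
    IsSemireal (RingHom.eqLocusField (γ : k →+* k) (RingHom.id k)) := by
  rw [isSemireal_iff_not_isSumSq_neg_one]
  intro h
  obtain ⟨i, hγi, hi⟩ := exists_eq_mul_self_of_isSumSq_fixed hinv hne h
  have hi' : i * i = -1 := by rw [← hi]; simp
  have h := map_eq_neg_of_involution hinv hne hi'
  have h0 : 2 * i = 0 := by linear_combination h - hγi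
  rcases mul_eq_zero.1 h0 with h | rfl
  · exact two_ne_zero_of_involution hinv hne h
  · simp at hi'

end Involution

section Extension

theorem IsSemireal.of_ringHom {A B : Type*} [Ring A] [Ring B] (f : A →+* B) [IsSemireal B] :
    IsSemireal A := by
  rw [isSemireal_iff_not_isSumSq_neg_one]
  intro h
  exact IsSemireal.not_isSumSq_neg_one B (by simpa using h.map f)

theorem isSemireal_sSup {L : Type*} [Field L] {c : Set (Subfield L)} (hne : c.Nonempty)
    (hc : IsChain (· ≤ ·) c) (h : ∀ S ∈ c, IsSemireal S) : IsSemireal (sSup c : Subfield L) := by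
  have key : ∀ s : (sSup c : Subfield L), IsSumSq s →
      ∃ S ∈ c, ∃ t : S, IsSumSq t ∧ (t : L) = s := by
    intro s hs
    induction hs with
    | zero =>
      obtain ⟨S, hS⟩ := hne
      exact ⟨S, hS, 0, .zero, rfl⟩
    | @sq_add a s _ ih =>
      obtain ⟨S, hS, t, ht, e⟩ := ih
      obtain ⟨T, hT, ha⟩ := (Subfield.mem_sSup_of_directedOn hne hc.directedOn).1 a.2
      obtain ⟨U, hU, hSU, hTU⟩ := hc.directedOn S hS T hT
      exact ⟨U, hU, ⟨a, hTU ha⟩ * ⟨a, hTU ha⟩ + Subfield.inclusion hSU t,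
        .sq_add _ (ht.map _), congrArg ((a : L) * a + ·) e⟩
  rw [isSemireal_iff_not_isSumSq_neg_one]
  intro hs
  obtain ⟨S, hS, t, ht, e⟩ := key _ hs
  have := h S hS
  refine IsSemireal.not_isSumSq_neg_one S ?_
  rwa [show t = -1 from Subtype.ext e] at ht

theorem exists_le_maximal_isSemireal {L : Type*} [Field L] (R : Subfield L) (hR : IsSemireal R) :
    ∃ M : Subfield L, R ≤ M ∧ IsSemireal M ∧
      ∀ α : L, IsSemireal M⟮α⟯ → α ∈ (⊥ : IntermediateField M L) := by
  obtain ⟨M, hRM, hM⟩ := zorn_le_nonempty₀ {S : Subfield L | IsSemireal S}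
    (fun c hcs hc y hy => ⟨sSup c, isSemireal_sSup ⟨y, hy⟩ hc fun _ hS => hcs hS,
      fun _ hz => le_sSup hz⟩) R hR
  refine ⟨M, hRM, hM.1, fun α hα => ?_⟩
  have hle : M ≤ M⟮α⟯.toSubfield := fun x hx => M⟮α⟯.algebraMap_mem ⟨x, hx⟩
  have : α ∈ M := hM.2 (y := M⟮α⟯.toSubfield) hα hle (mem_adjoin_simple_self M α)
  exact mem_bot.2 ⟨⟨α, this⟩, rfl⟩

end Extension

theorem IsRealClosed.exists_involution {K L : Type*} [Field K] [IsRealClosed K] [Field L]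
    [Algebra K L] [IsAlgClosed L] [Algebra.IsAlgebraic K L] {i : L} (hi : i * i = -1) :
    ∃ σ : L ≃ₐ[K] L, (∀ x, σ (σ x) = x) ∧ σ i = -i := by
  have : IsAlgClosure K L := ⟨inferInstance, inferInstance⟩
  have : Normal K L := IsAlgClosure.normal K L
  have : IsGalois K L := ⟨⟩
  have hmem : i ∉ (⊥ : IntermediateField K L) := fun h => by
    obtain ⟨j, rfl⟩ := mem_bot.1 h
    refine IsSemireal.not_isSumSq_neg_one K ?_
    rw [← (algebraMap K L).injective (a₁ := j * j) (a₂ := -1) (by simpa using hi)]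
    exact .mul_self j
  rw [InfiniteGalois.mem_bot_iff_fixed] at hmem
  push Not at hmem
  obtain ⟨σ, hσ⟩ := hmem
  have hσi : σ i = -i :=
    (mul_self_eq_mul_self_iff.1 (by rw [← map_mul, hi, map_neg, map_one])).resolve_left hσ
  refine ⟨σ, fun x => ?_, hσi⟩
  obtain ⟨a, b, rfl⟩ := IsRealClosed.exists_eq_add_mul (K := K) hi x
  simp [hσi]

theorem stmt_4 (k ℓ : Type*) [Field k] [Field ℓ] [Algebra k ℓ]
    [IsAlgClosed k] [IsAlgClosed ℓ]
    (γ : k ≃+* k) (hinv : ∀ x, γ (γ x) = x) (hne : γ ≠ RingEquiv.refl k) :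
    ∃ γbar : ℓ ≃+* ℓ, (∀ x, γbar (γbar x) = x) ∧ γbar ≠ RingEquiv.refl ℓ ∧
      ∀ a : k, γbar (algebraMap k ℓ a) = algebraMap k ℓ (γ a) := by
  let R := RingHom.eqLocusField (γ : k →+* k) (RingHom.id k)
  have hR : IsSemireal R := isSemireal_fixed_of_involution hinv hne
  have hR' : IsSemireal (R.map (algebraMap k ℓ)) :=
    .of_ringHom (R.equivMapOfInjective (algebraMap k ℓ) (algebraMap k ℓ).injective).symm.toRingHom
  obtain ⟨M, hRM, _, hmax⟩ := exists_le_maximal_isSemireal _ hR'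
  have := isRealClosed_of_maximal hmax
  have := isAlgebraic_of_maximal hmax
  obtain ⟨i, hi⟩ := IsAlgClosed.exists_pow_nat_eq (-1 : k) two_pos
  rw [pow_two] at hi
  have hi' : algebraMap k ℓ i * algebraMap k ℓ i = -1 := by rw [← map_mul, hi, map_neg, map_one]
  obtain ⟨σ, hσ, hσi⟩ := IsRealClosed.exists_involution (K := M) hi'
  have hγi := map_eq_neg_of_involution hinv hne hi
  have h2 := two_ne_zero_of_involution hinv hne
  have hi0 : i ≠ 0 := by rintro rfl; simp at hi
  have hfix : ∀ a : k, γ a = a → σ (algebraMap k ℓ a) = algebraMap k ℓ a := fun a ha =>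
    σ.commutes ⟨algebraMap k ℓ a, hRM (Subfield.mem_map.2 ⟨a, ha, rfl⟩)⟩
  have hext : ∀ a : k, σ (algebraMap k ℓ a) = algebraMap k ℓ (γ a) := fun a => by
    obtain ⟨u, v, hu, hv, rfl⟩ : ∃ u v, γ u = u ∧ γ v = v ∧ a = u + v * i := by
      refine ⟨(a + γ a) / 2, (a - γ a) / (2 * i), ?_, ?_, by field_simp; ring⟩
      · rw [map_div₀, map_add, hinv, map_ofNat, add_comm]
      · rw [map_div₀, map_sub, hinv, map_mul, map_ofNat, hγi]
        field_simp
        ring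
    simp only [map_add, map_mul, hu, hv, hfix, hσi, hγi, map_neg]
  refine ⟨σ.toRingEquiv, hσ, fun h => ?_, hext⟩
  refine hne (RingEquiv.ext fun a => (algebraMap k ℓ).injective ?_)
  rw [← hext]
  exact RingEquiv.congr_fun h _
end
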